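/- Let F ∈ R^{l×l}, let f ∈ K[z_2, …, z_n], and suppose (z_1 − f) divides det(F). If for some k with 1 ≤ k < l the k×k minors of F have gcd 1 (i.e. d_k(F) = 1 up to a unit), J_k(F) = R, and (z_1 − f) divides d_{k+1}(F), then there exists a unimodular matrix U ∈ R^{l×l} whose entries do not involve z_1 such that U·F = diag(I_k, (z_1 − f)·I_{l−k}) · G for some G ∈ R^{l×l}. -/

import Mathlib

open MvPolynomial Matrix

section Defs

variable {A : Type*} [CommRing A]

/-- The set of all `k × k` minors of a matrix. -/
def minorsSet {l m : ℕ} (F : Matrix (Fin l) (Fin m) A) (k : ℕ) : Set A :=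
  { p | ∃ (r : Fin k ↪ Fin l) (c : Fin k ↪ Fin m), p = (F.submatrix ⇑r ⇑c).det }

/-- `d` is a greatest common divisor of the `k × k` minors of `F`. -/
def IsGcdMinors {l m : ℕ} (F : Matrix (Fin l) (Fin m) A) (k : ℕ) (d : A) : Prop :=
  (∀ p ∈ minorsSet F k, d ∣ p) ∧ ∀ e : A, (∀ p ∈ minorsSet F k, e ∣ p) → e ∣ d

/-- The ideal generated by the `k × k` reduced minors of `F`, relative to a gcd `d`
of the `k × k` minors (the reduced minors are the `v` with `d * v` a minor). -/
def reducedIdeal {l m : ℕ} (F : Matrix (Fin l) (Fin m) A) (k : ℕ) (d : A) : Ideal A :=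
  Ideal.span { v : A | d * v ∈ minorsSet F k }

/-- `J_k(F) = R`: the `k × k` reduced minors of `F` generate the unit ideal. -/
def JkUnit {l m : ℕ} (F : Matrix (Fin l) (Fin m) A) (k : ℕ) : Prop :=
  ∃ d : A, IsGcdMinors F k d ∧ reducedIdeal F k d = ⊤

/-- `F` has rank `r`: some `r × r` minor is nonzero and all `(r+1) × (r+1)` minors vanish. -/
def HasRank {l m : ℕ} (F : Matrix (Fin l) (Fin m) A) (r : ℕ) : Prop :=
  (∃ p ∈ minorsSet F r, p ≠ 0) ∧ ∀ p ∈ minorsSet F (r + 1), p = 0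

/-- Equivalence of matrices: `F₁ = U * F₂ * V` for unimodular `U`, `V`. -/
def MatEquiv {l m : ℕ} (F₁ F₂ : Matrix (Fin l) (Fin m) A) : Prop :=
  ∃ (U : Matrix (Fin l) (Fin l) A) (V : Matrix (Fin m) (Fin m) A),
    IsUnit U.det ∧ IsUnit V.det ∧ F₁ = U * F₂ * V

/-- The rectangular diagonal matrix with diagonal entries `Φ`. -/
def smithDiag {l m : ℕ} (Φ : Fin l → A) : Matrix (Fin l) (Fin m) A :=
  Matrix.of fun i j => if (i : ℕ) = (j : ℕ) then Φ i else 0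

/-- `F` (of rank `r`) is equivalent to its Smith form: there are diagonal entries `Φ` such that
for each `i ≤ r` the product `Φ_1 ⋯ Φ_i` is a gcd of the `i × i` minors of `F`
(i.e. `Φ_i = d_i(F)/d_{i-1}(F)`), `Φ_i = 0` for `i > r`, and `F` is equivalent to
the diagonal matrix with entries `Φ`. -/
def SmithEquivAt {l m : ℕ} (F : Matrix (Fin l) (Fin m) A) (r : ℕ) : Prop :=
  ∃ Φ : Fin l → A,
    (∀ i : Fin l, (i : ℕ) < r →
      IsGcdMinors F ((i : ℕ) + 1) (∏ j ∈ Finset.Iic i, Φ j)) ∧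
    (∀ i : Fin l, r ≤ (i : ℕ) → Φ i = 0) ∧
    MatEquiv F (smithDiag Φ)

/-- `F` is equivalent to its Smith form. -/
def EquivToSmith {l m : ℕ} (F : Matrix (Fin l) (Fin m) A) : Prop :=
  ∃ r : ℕ, HasRank F r ∧ SmithEquivAt F r

end Defs

/-!
Substituting `z₁ = f` turns `F` into a matrix `M` over `K[z₂, …, zₙ]` whose `k × k` minors generate
the unit ideal and whose `(k + 1) × (k + 1)` minors vanish. Cramer's rule then gives `H` with
`M H M = M`, so the column module of `M` is a direct summand of rank at most `k`. By Quillen–Suslin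
it and its complement are free, and a base change `U` over `K[z₂, …, zₙ]` adapted to this splitting
kills all rows of `M` after the first `k`. Hence these rows of `U F` lie in the kernel of the
substitution, which is generated by `z₁ - f`.

Quillen–Suslin goes by induction on the number of variables. Let `P` be finite projective over
`A[X]`. A Nagata change of variables makes `P` free up to an `A`-finite projective quotient, and
Schanuel's lemma against the characteristic presentation of this quotient shows that `P` is stably
free. It remains to complete unimodular vectors with a monic entry: the equivalence class of `v(b)`
depends on `b` only modulo each `c` in an ideal which lies in no maximal ideal of `A`, so `v(X)` is
equivalent to `v(0)`, a vector over `A`.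
-/

universe u

section Nagata

open scoped Polynomial

lemma leadingCoeff_eval_of_natDegree_coeff_lt {S : Type*} [CommRing S] {q : S[X][X]} {h : S[X]}
    (hh : h.Monic) (hq : ∀ j, (q.coeff j).natDegree < h.natDegree) :
    (q.eval h).leadingCoeff = q.leadingCoeff.leadingCoeff := by
  rcases eq_or_ne q 0 with rfl | hq0
  · simp
  have hlow : (∑ j ∈ Finset.range q.natDegree, q.coeff j * h ^ j).degree <
      (q.natDegree * h.natDegree : ℕ) := by
    refine Polynomial.mem_degreeLT.1 (Submodule.sum_mem _ fun j hj => Polynomial.mem_degreeLT.2 ?_)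
    refine Polynomial.degree_le_natDegree.trans_lt (Nat.cast_lt.2 ?_)
    calc (q.coeff j * h ^ j).natDegree ≤ (q.coeff j).natDegree + j * h.natDegree :=
          Polynomial.natDegree_mul_le.trans (by rw [hh.natDegree_pow])
      _ < (j + 1) * h.natDegree := by linarith [hq j]
      _ ≤ q.natDegree * h.natDegree := Nat.mul_le_mul_right _ (Finset.mem_range.1 hj)
  have htop : (q.natDegree * h.natDegree : ℕ) ≤ (q.leadingCoeff * h ^ q.natDegree).degree := by
    rw [Polynomial.degree_eq_natDegree
        ((hh.pow _).mul_left_ne_zero (Polynomial.leadingCoeff_ne_zero.2 hq0)),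
      mul_comm q.leadingCoeff, (hh.pow _).natDegree_mul' (Polynomial.leadingCoeff_ne_zero.2 hq0),
      hh.natDegree_pow]
    exact_mod_cast Nat.le_add_right _ _
  rw [Polynomial.eval_eq_sum_range, Finset.sum_range_succ, Polynomial.coeff_natDegree,
    Polynomial.leadingCoeff_add_of_degree_lt (hlow.trans_le htop),
    Polynomial.leadingCoeff_mul_monic (hh.pow _)]

lemma exists_ringEquiv_isUnit_leadingCoeff_of_bivariate {B : Type*} [CommRing B] {g : B[X][X]}
    (hg : IsUnit g.leadingCoeff.leadingCoeff) :
    ∃ e : B[X][X] ≃+* B[X][X], IsUnit (e g).leadingCoeff := by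
  nontriviality B
  let N := (g.support.sup fun j => (g.coeff j).natDegree) + 1
  -- Shear the outer variable by `X ^ N`, then exchange the variables: for `N` large, distinct
  -- powers of the sheared variable contribute terms of distinct degrees.
  let e : B[X][X] ≃+* B[X][X] :=
    ((Polynomial.taylorEquiv (Polynomial.X ^ N : B[X])).toRingEquiv).trans
      (Polynomial.Bivariate.swap (R := B)).toRingEquiv
  let h : B[X][X] := Polynomial.X ^ N + Polynomial.C Polynomial.X
  have hdeg : h.natDegree = N := Polynomial.natDegree_X_pow_add_C
  have hcoeff (j : ℕ) : (g.coeff j).natDegree < N := by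
    by_cases hj : j ∈ g.support
    · exact Nat.lt_succ_of_le (Finset.le_sup (f := fun j => (g.coeff j).natDegree) hj)
    · simp [N, Polynomial.notMem_support_iff.1 hj]
  have hinj : Function.Injective (Polynomial.mapRingHom (Polynomial.C : B →+* B[X])) :=
    Polynomial.map_injective _ Polynomial.C_injective
  have he : (e : B[X][X] →+* B[X][X]) = (Polynomial.evalRingHom h).comp
      (Polynomial.mapRingHom (Polynomial.mapRingHom Polynomial.C)) := by
    refine Polynomial.ringHom_ext (fun p => ?_) ?_
    · change Polynomial.Bivariate.swap (Polynomial.taylor _ (Polynomial.C p)) = _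
      simp [Polynomial.Bivariate.swap_C]
    · change Polynomial.Bivariate.swap (Polynomial.taylor _ Polynomial.X) = _
      rw [Polynomial.taylor_X, map_add, Polynomial.Bivariate.swap_Y, Polynomial.Bivariate.swap_C]
      simp [h, add_comm]
  refine ⟨e, ?_⟩
  rw [show e g = (g.map (Polynomial.mapRingHom Polynomial.C)).eval h from DFunLike.congr_fun he g,
    leadingCoeff_eval_of_natDegree_coeff_lt (Polynomial.monic_X_pow_add_C _ (by simp [N])),
    Polynomial.leadingCoeff_map_of_injective hinj, Polynomial.coe_mapRingHom,
    Polynomial.leadingCoeff_map_of_injective Polynomial.C_injective]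
  · exact hg.map Polynomial.C
  · intro j
    rw [Polynomial.coeff_map, hdeg, Polynomial.coe_mapRingHom]
    exact Polynomial.natDegree_map_le.trans_lt (hcoeff j)

lemma leadingCoeff_mapEquiv {S T : Type*} [CommRing S] [CommRing T] (e : S ≃+* T) (p : S[X]) :
    (Polynomial.mapEquiv e p).leadingCoeff = e p.leadingCoeff :=
  Polynomial.leadingCoeff_map_of_injective e.injective p

lemma mvPolynomial_exists_ringEquiv_isUnit_leadingCoeff {K : Type*} [Field K] {n : ℕ}
    {g : MvPolynomial (Fin (n + 1)) K} (hg : g ≠ 0) :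
    ∃ e : MvPolynomial (Fin (n + 1)) K ≃+* (MvPolynomial (Fin n) K)[X],
      IsUnit (e g).leadingCoeff := by
  induction n with
  | zero =>
    have hlead : (finSuccEquiv K 0 g).leadingCoeff ≠ 0 := by simpa using hg
    exact ⟨(finSuccEquiv K 0).toRingEquiv, (isUnit_map_iff (isEmptyAlgEquiv K (Fin 0)) _).1
      ((map_ne_zero_iff _ (isEmptyAlgEquiv K (Fin 0)).injective).2 hlead).isUnit⟩
  | succ n ih =>
    obtain ⟨e, he⟩ := ih (g := (finSuccEquiv K (n + 1) g).leadingCoeff) (by simpa using hg)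
    let e₁ := (finSuccEquiv K (n + 1)).toRingEquiv.trans (Polynomial.mapEquiv e)
    obtain ⟨e₂, he₂⟩ := exists_ringEquiv_isUnit_leadingCoeff_of_bivariate (g := e₁ g)
      (by rw [RingEquiv.trans_apply, leadingCoeff_mapEquiv]; exact he)
    let e₃ := (finSuccEquiv K n).symm.toRingEquiv
    refine ⟨(e₁.trans e₂).trans (Polynomial.mapEquiv e₃), ?_⟩
    rw [RingEquiv.trans_apply, leadingCoeff_mapEquiv]
    exact he₂.map e₃

end Nagata

section StablyFree

open scoped Polynomial

/-- Finitely generated projective modules are free: the property of `A` that the Quillen–Suslin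
theorem asserts for polynomial rings. Quantifying over modules in the universe of `A` suffices. -/
def ProjectivesFree (A : Type u) [CommRing A] : Prop :=
  ∀ (P : Type u) [AddCommGroup P] [Module A P] [Module.Finite A P] [Module.Projective A P],
    Module.Free A P

lemma exists_linearIndependent_smul_mem_span (R P : Type*) [CommRing R] [IsDomain R]
    [AddCommGroup P] [Module R P] [Module.Finite R P] :
    ∃ (r : ℕ) (b : Fin r → P) (g : R), LinearIndependent R b ∧ g ≠ 0 ∧
      ∀ p, g • p ∈ Submodule.span R (Set.range b) := by
  obtain ⟨b, hb⟩ := exists_linearIndependent_of_le_finrank (le_refl (Module.finrank R P))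
  set N := Submodule.span R (Set.range b) with hN
  have hrank : Module.finrank R (P ⧸ N) = 0 := by
    have hsum := N.finrank_quotient_add_finrank
    rw [hN, finrank_span_eq_card hb, Fintype.card_fin, ← hN] at hsum
    omega
  have htorsion : Module.IsTorsion R (P ⧸ N) := fun {x} => by
    obtain ⟨a, ha, hax⟩ := Module.finrank_eq_zero_iff.1 hrank x
    exact ⟨⟨a, mem_nonZeroDivisors_of_ne_zero ha⟩, hax⟩
  obtain ⟨g, hgann, hg⟩ := Submodule.annihilator_top_inter_nonZeroDivisors htorsion
  refine ⟨_, b, g, hb, nonZeroDivisors.ne_zero hg, fun p => ?_⟩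
  exact (Submodule.Quotient.mk_eq_zero N).1
    (Submodule.mem_annihilator.1 hgann (N.mkQ p) trivial)

lemma projective_of_projective_of_free (A B P : Type*) [CommRing A] [CommRing B] [Algebra A B]
    [Module.Free A B] [AddCommGroup P] [Module A P] [Module B P] [IsScalarTower A B P]
    [Module.Projective B P] : Module.Projective A P := by
  obtain ⟨s, hs⟩ := Module.projective_def'.1 ‹Module.Projective B P›
  exact Module.Projective.of_split (s.restrictScalars A)
    ((Finsupp.linearCombination B id).restrictScalars A)
    (LinearMap.ext fun p => LinearMap.congr_fun hs p)

section Monic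

variable {A : Type*} [CommRing A] {M : Type*} [AddCommGroup M] [Module A[X] M] [Module A M]
  [IsScalarTower A A[X] M] {g : A[X]}

lemma finite_of_monic_smul_eq_zero (hg : g.Monic) [Module.Finite A[X] M]
    (hM : ∀ m : M, g • m = 0) : Module.Finite A M := by
  have htorsion : Module.IsTorsionBySet A[X] M (Ideal.span {g}) :=
    (Module.isTorsionBySet_span_singleton_iff g).2 fun m => hM m
  let : Module (A[X] ⧸ Ideal.span {g}) M := htorsion.module
  have : Module.Finite (A[X] ⧸ Ideal.span {g}) M := Module.Finite.of_restrictScalars_finite A[X] _ M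
  have := hg.finite_quotient
  exact Module.Finite.trans (A[X] ⧸ Ideal.span {g}) M

lemma exists_leftInverse_mul_of_monic (hg : g.Monic) :
    ∃ δ : A[X] →ₗ[A] A[X], ∀ p, δ (g * p) = p := by
  nontriviality A
  have hdiv (q r : A[X]) (hr : r.degree < g.degree) : (r + g * q) /ₘ g = q :=
    (Polynomial.div_modByMonic_unique q r hg ⟨rfl, hr⟩).1
  have hlt (p : A[X]) : (p %ₘ g).degree < g.degree := Polynomial.degree_modByMonic_lt p hg
  refine ⟨{ toFun p := p /ₘ g, map_add' p q := ?_, map_smul' a p := ?_ },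
    fun p => Polynomial.mul_divByMonic_cancel_left p hg⟩
  · rw [← hdiv (p /ₘ g + q /ₘ g) (p %ₘ g + q %ₘ g)
      ((Polynomial.degree_add_le _ _).trans_lt (max_lt (hlt p) (hlt q)))]
    congr 1
    linear_combination -Polynomial.modByMonic_add_div p g - Polynomial.modByMonic_add_div q g
  · rw [RingHom.id_apply, ← hdiv (a • (p /ₘ g)) (a • (p %ₘ g))
      ((Polynomial.degree_smul_le _ _).trans_lt (hlt p)), mul_smul_comm, ← smul_add,
      Polynomial.modByMonic_add_div p g]

lemma exists_leftInverse_subtype_of_monic_smul_mem (hg : g.Monic) (N : Submodule A[X] M)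
    [Module.Free A[X] N] (hN : ∀ m : M, g • m ∈ N) :
    ∃ ρ : M →ₗ[A] N, ∀ n : N, ρ n = n := by
  obtain ⟨δ, hδ⟩ := exists_leftInverse_mul_of_monic hg
  let b := Module.Free.chooseBasis A[X] N
  let gmul : M →ₗ[A[X]] N := (LinearMap.lsmul A[X] M g).codRestrict N hN
  refine ⟨(b.repr.symm.toLinearMap.restrictScalars A) ∘ₗ Finsupp.mapRange.linearMap δ ∘ₗ
    (b.repr.toLinearMap.restrictScalars A) ∘ₗ gmul.restrictScalars A, fun n => ?_⟩
  have hgmul : gmul n = g • n := rfl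
  apply b.repr.injective
  ext i
  simp [hgmul, hδ]

lemma projective_quotient_of_monic_smul_mem (hg : g.Monic) [Module.Projective A[X] M]
    (N : Submodule A[X] M) [Module.Free A[X] N] (hN : ∀ m : M, g • m ∈ N) :
    Module.Projective A (M ⧸ N) := by
  have := projective_of_projective_of_free A A[X] M
  obtain ⟨ρ, hρ⟩ := exists_leftInverse_subtype_of_monic_smul_mem hg N hN
  have hexact : Function.Exact (N.subtype.restrictScalars A) (N.mkQ.restrictScalars A) :=
    LinearMap.exact_subtype_mkQ N
  obtain ⟨e, -⟩ := hexact.splitInjectiveEquiv N.mkQ_surjective ⟨ρ, LinearMap.ext hρ⟩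
  exact Module.Projective.of_split (e.symm.toLinearMap ∘ₗ LinearMap.inr A N (M ⧸ N))
    (LinearMap.snd A N (M ⧸ N) ∘ₗ e.toLinearMap) (by ext; simp)

end Monic

lemma nonempty_ker_prod_equiv_of_projective {R P F Q : Type*} [CommRing R] [AddCommGroup P]
    [Module R P] [AddCommGroup F] [Module R F] [AddCommGroup Q] [Module R Q]
    [Module.Projective R P] [Module.Projective R F] {f : P →ₗ[R] Q} {h : F →ₗ[R] Q}
    (hf : Function.Surjective f) (hh : Function.Surjective h) :
    Nonempty ((P × LinearMap.ker h) ≃ₗ[R] F × LinearMap.ker f) := by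
  obtain ⟨σ, hσ⟩ := Module.projective_lifting_property h f hh
  obtain ⟨τ, hτ⟩ := Module.projective_lifting_property f h hf
  replace hσ (p : P) : h (σ p) = f p := LinearMap.congr_fun hσ p
  replace hτ (q : F) : f (τ q) = h q := LinearMap.congr_fun hτ q
  let toF : P × LinearMap.ker h →ₗ[R] F :=
    σ ∘ₗ LinearMap.fst R _ _ + (LinearMap.ker h).subtype ∘ₗ LinearMap.snd R _ _
  let toP : F × LinearMap.ker f →ₗ[R] P :=
    τ ∘ₗ LinearMap.fst R _ _ + (LinearMap.ker f).subtype ∘ₗ LinearMap.snd R _ _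
  have hP (x : P × LinearMap.ker h) : x.1 - τ (toF x) ∈ LinearMap.ker f := by
    simp [toF, hσ, hτ]
  have hF (y : F × LinearMap.ker f) : y.1 - σ (toP y) ∈ LinearMap.ker h := by
    simp [toP, hσ, hτ]
  exact ⟨{
    __ := toF.prod ((LinearMap.fst R _ _ - τ ∘ₗ toF).codRestrict _ hP)
    invFun y := (toP y, ⟨y.1 - σ (toP y), hF y⟩)
    left_inv x := by
      have hfst : toP (toF x, ⟨x.1 - τ (toF x), hP x⟩) = x.1 := by simp [toP]
      refine Prod.ext hfst (Subtype.ext ?_)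
      change toF x - σ (toP (toF x, ⟨x.1 - τ (toF x), hP x⟩)) = x.2
      rw [hfst]
      simp [toF]
    right_inv y := by
      have hfst : toF (toP y, ⟨y.1 - σ (toP y), hF y⟩) = y.1 := by simp [toF]
      refine Prod.ext hfst (Subtype.ext ?_)
      change toP y - τ (toF (toP y, ⟨y.1 - σ (toP y), hF y⟩)) = y.2
      rw [hfst]
      simp [toP] }⟩

section Characteristic

variable {A : Type*} [CommRing A] {M : Type*} [AddCommGroup M] [Module A[X] M] [Module A M]
  [IsScalarTower A A[X] M] {ι : Type*} [Fintype ι] [DecidableEq ι]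

lemma charmatrix_mulVec_injective (N : Matrix ι ι A) :
    Function.Injective (N.charmatrix.mulVecLin) := by
  refine (injective_iff_map_eq_zero _).2 fun v (hv : N.charmatrix *ᵥ v = 0) => ?_
  have hdet : N.charpoly • v = 0 := by
    rw [← Matrix.one_mulVec v, ← Matrix.smul_mulVec, Matrix.charpoly, ← Matrix.adjugate_mul,
      ← Matrix.mulVec_mulVec, hv, Matrix.mulVec_zero]
  ext1 i
  exact N.charpoly_monic.isRegular.left.mul_left_eq_zero_iff.1 (congrFun hdet i)

lemma charmatrix_mulVec_C (N : Matrix ι ι A) (c : ι → A) :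
    N.charmatrix *ᵥ (Polynomial.C ∘ c) =
      (Polynomial.X : A[X]) • (Polynomial.C ∘ c) - Polynomial.C ∘ (N *ᵥ c) := by
  ext1 i
  simp [Matrix.charmatrix, Matrix.sub_mulVec, RingHom.map_mulVec]

lemma exists_sub_C_mem_range_charmatrix (N : Matrix ι ι A) (v : ι → A[X]) :
    ∃ c : ι → A, v - Polynomial.C ∘ c ∈ LinearMap.range N.charmatrix.mulVecLin := by
  let consts : (ι → A) →ₗ[A] (ι → A[X]) := (Algebra.linearMap A A[X]).compLeft ι
  let W := (LinearMap.range N.charmatrix.mulVecLin).restrictScalars A ⊔ LinearMap.range consts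
  have hX (w : ι → A[X]) (hw : w ∈ W) : (Polynomial.X : A[X]) • w ∈ W := by
    obtain ⟨y, hy, _, ⟨c, rfl⟩, rfl⟩ := Submodule.mem_sup.1 hw
    have hc : (Polynomial.X : A[X]) • consts c =
        N.charmatrix *ᵥ (Polynomial.C ∘ c) + consts (N *ᵥ c) := by
      rw [charmatrix_mulVec_C]
      exact (sub_add_cancel _ _).symm
    rw [smul_add, hc]
    exact add_mem (Submodule.mem_sup_left ((LinearMap.range _).smul_mem _ hy))
      (add_mem (Submodule.mem_sup_left ⟨_, rfl⟩) (Submodule.mem_sup_right ⟨_, rfl⟩))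
  have hXpow (k : ℕ) (w : ι → A[X]) (hw : w ∈ W) : (Polynomial.X ^ k : A[X]) • w ∈ W := by
    induction k with
    | zero => simpa using hw
    | succ k ih => rw [pow_succ', mul_smul]; exact hX _ ih
  have hsmul (p : A[X]) (w : ι → A[X]) (hw : w ∈ W) : p • w ∈ W := by
    induction p using Polynomial.induction_on' with
    | add p q hp hq => rw [add_smul]; exact add_mem hp hq
    | monomial k a =>
      rw [← Polynomial.smul_X_eq_monomial, smul_assoc]
      exact W.smul_mem a (hXpow k w hw)
  have hsingle (i : ι) : Pi.single i (1 : A[X]) ∈ W :=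
    Submodule.mem_sup_right ⟨Pi.single i 1, by ext1 j; simp [consts, Pi.single_apply]⟩
  have hv : v ∈ W := by
    rw [← Finset.univ_sum_single v]
    refine sum_mem fun i _ => ?_
    rw [show Pi.single i (v i) = v i • Pi.single i (1 : A[X]) by simp [← Pi.single_smul]]
    exact hsmul _ _ (hsingle i)
  obtain ⟨y, hy, _, ⟨c, rfl⟩, hyc⟩ := Submodule.mem_sup.1 hv
  refine ⟨c, ?_⟩
  have : y = v - Polynomial.C ∘ c := eq_sub_of_add_eq hyc
  exact this ▸ hy

lemma range_charmatrix_mulVec (b : Module.Basis ι A M) :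
    LinearMap.range (LinearMap.toMatrix b b
        ((LinearMap.lsmul A[X] M Polynomial.X).restrictScalars A)).charmatrix.mulVecLin =
      LinearMap.ker (Fintype.linearCombination A[X] b) := by
  set N := LinearMap.toMatrix b b ((LinearMap.lsmul A[X] M Polynomial.X).restrictScalars A)
  set χ := N.charmatrix.mulVecLin with hχ
  set π := Fintype.linearCombination A[X] b with hπ
  have hX (j : ι) : (Polynomial.X : A[X]) • b j = ∑ i, N i j • b i := by
    rw [← b.sum_repr (Polynomial.X • b j)]
    simp [N, LinearMap.toMatrix_apply]
  have hC (c : ι → A) : π (Polynomial.C ∘ c) = ∑ i, c i • b i := by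
    simp [hπ, Fintype.linearCombination_apply, Polynomial.C_eq_algebraMap]
  have hπχ (v : ι → A[X]) : π (χ v) = 0 := by
    suffices π ∘ₗ χ = 0 from LinearMap.congr_fun this v
    ext1 j
    have hj : Pi.single j (1 : A[X]) = Polynomial.C ∘ Pi.single j 1 := by
      ext1 i
      rcases eq_or_ne i j with rfl | hij <;> simp [*]
    ext1
    rw [LinearMap.comp_apply, LinearMap.comp_apply, LinearMap.coe_single, hj, hχ,
      Matrix.mulVecLin_apply, charmatrix_mulVec_C, map_sub, map_smul, hC, hC]
    simp [hX, Pi.single_apply]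
  refine le_antisymm ?_ fun v hv => ?_
  · rintro _ ⟨v, rfl⟩
    exact hπχ v
  · obtain ⟨c, w, hw⟩ := exists_sub_C_mem_range_charmatrix N v
    have hc : ∑ i, c i • b i = 0 := by
      rw [← hC, ← sub_sub_cancel v (Polynomial.C ∘ c), map_sub, ← hw, hπχ, hv, sub_zero]
    have hc0 : c = 0 := funext (Fintype.linearIndependent_iff.1 b.linearIndependent c hc)
    exact ⟨w, by rw [hw, hc0]; ext; simp⟩

end Characteristic

lemma isStablyFree_of_monic_smul_mem_span {A P : Type u} [CommRing A] (hA : ProjectivesFree A)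
    [AddCommGroup P] [Module A[X] P] [Module A P] [IsScalarTower A A[X] P] [Module.Finite A[X] P]
    [Module.Projective A[X] P] {κ : Type*} [Finite κ] {b : κ → P} (hb : LinearIndependent A[X] b)
    {g : A[X]} (hg : g.Monic) (h : ∀ p, g • p ∈ Submodule.span A[X] (Set.range b)) :
    Module.IsStablyFree A[X] P := by
  classical
  set N := Submodule.span A[X] (Set.range b)
  have : Module.Free A[X] N := .of_basis (.span hb)
  have : Module.Finite A[X] N := .of_basis (.span hb)
  have : Module.Projective A (P ⧸ N) := projective_quotient_of_monic_smul_mem hg N h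
  have : Module.Finite A (P ⧸ N) := finite_of_monic_smul_eq_zero hg fun m => by
    obtain ⟨p, rfl⟩ := N.mkQ_surjective m
    rw [← map_smul]
    exact (Submodule.Quotient.mk_eq_zero N).2 (h p)
  have : Module.Free A (P ⧸ N) := hA _
  let c := Module.Free.chooseBasis A (P ⧸ N)
  let π := Fintype.linearCombination A[X] c
  have hπ : Function.Surjective π := by
    rw [← LinearMap.range_eq_top, Fintype.range_linearCombination]
    exact Submodule.span_eq_top_of_span_eq_top A A[X] _ c.span_eq
  -- The kernel of `π` is free because it is the range of the injective matrix `X - c`, where `c`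
  -- is multiplication by `X` on the free `A`-module `P ⧸ N`.
  obtain ⟨e⟩ := nonempty_ker_prod_equiv_of_projective N.mkQ_surjective hπ
  let ker : (Module.Free.ChooseBasisIndex A (P ⧸ N) → A[X]) ≃ₗ[A[X]] LinearMap.ker π :=
    (LinearEquiv.ofInjective _ (charmatrix_mulVec_injective _)).trans
      (LinearEquiv.ofEq _ _ (range_charmatrix_mulVec c))
  have : Module.Free A[X] (LinearMap.ker π) := .of_equiv ker
  have : Module.Finite A[X] (LinearMap.ker π) := .equiv ker
  have : Module.Free A[X] (LinearMap.ker N.mkQ) := by rwa [Submodule.ker_mkQ]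
  have : Module.Free A[X] (P × LinearMap.ker π) := .of_equiv e.symm
  exact .of_free_prod A[X] P (LinearMap.ker π)

end StablyFree

section Unimodular

open scoped Polynomial

/-- Two vectors lie in the same orbit of the general linear group. -/
def UnimodularEquiv {R ι : Type*} [CommRing R] [Fintype ι] [DecidableEq ι] (v w : ι → R) : Prop :=
  ∃ M : Matrix ι ι R, IsUnit M.det ∧ M *ᵥ v = w

namespace UnimodularEquiv

variable {R ι : Type*} [CommRing R] [Fintype ι] [DecidableEq ι] {v w x : ι → R}

lemma refl (v : ι → R) : UnimodularEquiv v v := ⟨1, by simp, one_mulVec v⟩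

lemma symm : UnimodularEquiv v w → UnimodularEquiv w v := by
  rintro ⟨M, hM, rfl⟩
  exact ⟨M⁻¹, isUnit_nonsing_inv_det M hM, by rw [mulVec_mulVec, nonsing_inv_mul M hM, one_mulVec]⟩

lemma trans : UnimodularEquiv v w → UnimodularEquiv w x → UnimodularEquiv v x := by
  rintro ⟨M, hM, rfl⟩ ⟨N, hN, rfl⟩
  exact ⟨N * M, by simpa using ⟨hN, hM⟩, (mulVec_mulVec v N M).symm⟩

lemma map {S : Type*} [CommRing S] (φ : R →+* S) :
    UnimodularEquiv v w → UnimodularEquiv (φ ∘ v) (φ ∘ w) := by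
  rintro ⟨M, hM, rfl⟩
  refine ⟨M.map φ, ?_, (funext (RingHom.map_mulVec φ M v)).symm⟩
  rw [← RingHom.mapMatrix_apply, ← RingHom.map_det]
  exact hM.map φ

lemma of_reindex {κ : Type*} [Fintype κ] [DecidableEq κ] (e : κ ≃ ι) :
    UnimodularEquiv (v ∘ e) (w ∘ e) → UnimodularEquiv v w := by
  rintro ⟨M, hM, h⟩
  refine ⟨M.submatrix e.symm e.symm, by rwa [det_submatrix_equiv_self], ?_⟩
  rw [submatrix_mulVec_equiv, Equiv.symm_symm, h, Function.comp_assoc, e.self_comp_symm,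
    Function.comp_id]

lemma units_smul (u : Rˣ) (v : ι → R) : UnimodularEquiv v ((u : R) • v) :=
  ⟨(u : R) • 1, by simpa using u.isUnit.pow _, by rw [smul_mulVec, one_mulVec]⟩

end UnimodularEquiv

/-- Hermite rings in the sense of Lam: unimodular vectors are completable to invertible matrices. -/
def IsHermiteRing (R : Type*) [CommRing R] : Prop :=
  ∀ (ι : Type) [Fintype ι] [DecidableEq ι] (i : ι) (v w : ι → R), v ⬝ᵥ w = 1 →
    UnimodularEquiv v (Pi.single i 1)

lemma ProjectivesFree.exists_basis_apply_eq {A : Type u} [CommRing A] [Nontrivial A]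
    (hA : ProjectivesFree A) {ι : Type} [Fintype ι] {v w : ι → A} (hvw : v ⬝ᵥ w = 1) (i : ι) :
    ∃ b : Module.Basis ι A (ι → A), b i = v := by
  classical
  let φ : (ι → A) →ₗ[A] A := Fintype.linearCombination A w
  have hφ : φ v = 1 := hvw
  let proj : (ι → A) →ₗ[A] LinearMap.ker φ :=
    (LinearMap.id - φ.smulRight v).codRestrict _ fun x => by simp [hφ]
  have hcoe (x : ι → A) : (proj x : ι → A) = x - φ x • v := rfl
  have hproj (x : LinearMap.ker φ) : proj x = x := by ext; simp [hcoe]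
  have hprojv : proj v = 0 := by ext; simp [hcoe, hφ]
  let e : (ι → A) ≃ₗ[A] A × LinearMap.ker φ :=
    { __ := φ.prod proj
      invFun y := y.1 • v + y.2
      left_inv x := by simp [hcoe]
      right_inv y := by simp [hφ, hproj, hprojv] }
  have he : e v = (1, 0) := by simp [e, hprojv, hφ]
  have : Module.Projective A (LinearMap.ker φ) :=
    .of_split (LinearMap.ker φ).subtype proj (LinearMap.ext hproj)
  have : Module.Finite A (LinearMap.ker φ) := .of_surjective proj fun x => ⟨x, hproj x⟩
  have : Module.Free A (LinearMap.ker φ) := hA _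
  let b := ((Module.Basis.singleton Unit A).prod
    (Module.Free.chooseBasis A (LinearMap.ker φ))).map e.symm
  let σ := b.indexEquiv (Pi.basisFun A ι)
  exact ⟨b.reindex (σ.trans (Equiv.swap (σ (Sum.inl ())) i)), by simp [b, ← he]⟩

lemma ProjectivesFree.isHermiteRing {A : Type u} [CommRing A] (hA : ProjectivesFree A) :
    IsHermiteRing A := by
  intro ι _ _ i v w hvw
  cases subsingleton_or_nontrivial A
  · exact Subsingleton.elim v (Pi.single i 1) ▸ UnimodularEquiv.refl v
  obtain ⟨b, rfl⟩ := hA.exists_basis_apply_eq hvw i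
  refine ⟨LinearMap.toMatrix' b.equivFun, ?_, ?_⟩
  · rw [LinearMap.det_toMatrix']
    exact b.equivFun.isUnit_det'
  · rw [LinearMap.toMatrix'_mulVec]
    ext
    simp [Pi.single_apply, eq_comm]

lemma exists_det_eq_one_mulVec_eq {R : Type*} [CommRing R] [IsDomain R] {c : R} (hc : c ≠ 0)
    {x x' g g' : Fin 2 → R} (hg : x 0 * g 0 + x 1 * g 1 = c) (hg' : x' 0 * g' 0 + x' 1 * g' 1 = c)
    (hx : ∀ i, c ∣ x' i - x i) (hgg : ∀ i, c ∣ g' i - g i) :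
    ∃ E : Matrix (Fin 2) (Fin 2) R, E.det = 1 ∧ E *ᵥ x = x' := by
  choose w hw using hx
  choose d hd using hgg
  let Γ := !![x 0, -g 1; x 1, g 0]
  let Γ' := !![x' 0, -g' 1; x' 1, g' 0]
  let Δ := !![w 0, -d 1; w 1, d 0]
  let E := 1 + Δ * Γ.adjugate
  have hΓ : Γ.det = c := by rw [det_fin_two_of, ← hg]; ring
  have hΓ' : Γ'.det = c := by rw [det_fin_two_of, ← hg']; ring
  have hΔ : Γ + c • Δ = Γ' := by
    ext i j
    fin_cases i <;> fin_cases j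
    · exact (eq_add_of_sub_eq' (hw 0)).symm
    · change -g 1 + c * -d 1 = -g' 1
      linear_combination hd 1
    · exact (eq_add_of_sub_eq' (hw 1)).symm
    · exact (eq_add_of_sub_eq' (hd 0)).symm
  have hE : E * Γ = Γ' := by
    rw [add_mul, Matrix.one_mul, Matrix.mul_assoc, adjugate_mul, hΓ, Matrix.mul_smul,
      Matrix.mul_one, hΔ]
  refine ⟨E, mul_right_cancel₀ hc ?_, ?_⟩
  · rw [← hΓ, ← det_mul, hE, hΓ', hΓ, one_mul]
  · have hcol : Γ *ᵥ Pi.single 0 1 = x := by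
      ext i; fin_cases i <;> simp [Γ]
    rw [← hcol, mulVec_mulVec, hE]
    ext i; fin_cases i <;> simp [Γ']

lemma unimodularEquiv_of_dvd_sub {R κ : Type*} [CommRing R] [IsDomain R] [Fintype κ]
    [DecidableEq κ] {c : R} (hc : c ≠ 0) {v v' : Fin 2 ⊕ κ → R} {g g' : Fin 2 → R}
    (hg : v (.inl 0) * g 0 + v (.inl 1) * g 1 = c)
    (hg' : v' (.inl 0) * g' 0 + v' (.inl 1) * g' 1 = c)
    (hv : ∀ i, c ∣ v' i - v i) (hgg : ∀ i, c ∣ g' i - g i) : UnimodularEquiv v v' := by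
  obtain ⟨E, hE, hEv⟩ := exists_det_eq_one_mulVec_eq (x := v ∘ Sum.inl) (x' := v' ∘ Sum.inl)
    hc hg hg' (fun _ => hv _) hgg
  choose w hw using hv
  let N : Matrix κ (Fin 2) R := of fun k i => w (.inr k) * g i
  refine ⟨fromBlocks E 0 N 1, by simp [hE], ?_⟩
  rw [fromBlocks_mulVec, hEv, zero_mulVec, add_zero, one_mulVec]
  ext (i | k)
  · rfl
  · have hN : (N *ᵥ (v ∘ Sum.inl)) k = w (.inr k) * c := by
      simp only [N, mulVec, dotProduct, Fin.sum_univ_two, of_apply, Function.comp_apply, ← hg]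
      ring
    simp only [Sum.elim_inr, Pi.add_apply, Function.comp_apply, hN]
    linear_combination -hw (.inr k)

end Unimodular

section Hermite

open scoped Polynomial

lemma exists_isCoprime_add_mul {R : Type*} [CommRing R] [IsDomain R] [IsPrincipalIdealRing R]
    {a b g : R} (ha : a ≠ 0) (h : ∀ p, Prime p → p ∣ a → p ∣ b → ¬p ∣ g) :
    ∃ t, IsCoprime a (b + t * g) := by
  classical
  let t := ((UniqueFactorizationMonoid.factors a).filter fun q => ¬q ∣ b).prod
  have ht (p : R) (hp : Prime p) (hpa : p ∣ a) : p ∣ t ↔ ¬p ∣ b := by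
    refine ⟨fun hpt hpb => ?_, fun hpb => ?_⟩
    · obtain ⟨q, hq, hpq⟩ := hp.exists_mem_multiset_dvd hpt
      rw [Multiset.mem_filter] at hq
      exact hq.2 (((hp.irreducible.dvd_irreducible_iff_associated
        (UniqueFactorizationMonoid.irreducible_of_factor q hq.1)).1 hpq).dvd_iff_dvd_left.1 hpb)
    · obtain ⟨q, hq, hpq⟩ :=
        UniqueFactorizationMonoid.exists_mem_factors_of_dvd ha hp.irreducible hpa
      exact hpq.dvd.trans (Multiset.dvd_prod
        (Multiset.mem_filter.2 ⟨hq, fun hqb => hpb (hpq.dvd.trans hqb)⟩))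
  refine ⟨t, isCoprime_of_prime_dvd (fun h0 => ha h0.1) fun p hp hpa hpt => ?_⟩
  by_cases hpb : p ∣ b
  · rcases hp.dvd_or_dvd ((dvd_add_right hpb).1 hpt) with hpt | hpg
    · exact (ht p hp hpa).1 hpt hpb
    · exact h p hp hpa hpb hpg
  · exact hpb ((dvd_add_left (((ht p hp hpa).2 hpb).mul_right g)).1 hpt)

lemma exists_sub_one_mem_of_monic_mem {A : Type*} [CommRing A] {f : A[X]} (hf : f.Monic)
    {J : Ideal A[X]} (hfJ : f ∈ J) {I : Ideal A} (hJ : J ⊔ I.map Polynomial.C = ⊤) :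
    ∃ c, c - 1 ∈ I ∧ Polynomial.C c ∈ J := by
  have hle : Ideal.span {f} ≤ J := (Ideal.span_singleton_le_iff_mem J).2 hfJ
  have := hf.finite_quotient
  have : Module.Finite A (A[X] ⧸ J) :=
    .of_surjective (Ideal.Quotient.factorₐ A hle).toLinearMap (Ideal.Quotient.factor_surjective hle)
  have htop : (I • ⊤ : Submodule A (A[X] ⧸ J)) = ⊤ := by
    rw [Ideal.smul_top_eq_map, Submodule.restrictScalars_eq_top_iff,
      IsScalarTower.algebraMap_eq A A[X] (A[X] ⧸ J), ← Ideal.map_map,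
      ← bot_sup_eq (Ideal.map (algebraMap A[X] (A[X] ⧸ J)) _), ← Ideal.map_quotient_self J]
    exact (Ideal.map_sup _ _ _).symm.trans (hJ ▸ Ideal.map_top _)
  obtain ⟨c, hcI, hc⟩ := Submodule.exists_sub_one_mem_and_smul_eq_zero_of_fg_of_le_smul I
    (⊤ : Submodule A (A[X] ⧸ J)) Module.Finite.fg_top htop.ge
  refine ⟨c, hcI, Ideal.Quotient.eq_zero_iff_mem.1 ?_⟩
  exact (Algebra.algebraMap_eq_smul_one c).trans (hc 1 trivial)

lemma exists_C_eq_mul_add_mul {A : Type*} [CommRing A] {f₁ f₂ g a b : A[X]} (hf : f₁.Monic)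
    (h : a * f₁ + b * f₂ + g = 1) (m : Ideal A) [m.IsMaximal] :
    ∃ t p q, ∃ c ∉ m, p * f₁ + q * (f₂ + t * g) = Polynomial.C c := by
  let : Field (A ⧸ m) := Ideal.Quotient.field m
  let φ : A[X] →+* (A ⧸ m)[X] := Polynomial.mapRingHom (Ideal.Quotient.mk m)
  have hφ : Function.Surjective φ := Polynomial.map_surjective _ Ideal.Quotient.mk_surjective
  obtain ⟨t, ht⟩ := exists_isCoprime_add_mul (a := φ f₁) (b := φ f₂) (g := φ g)
    (hf.map _).ne_zero fun p hp h₁ h₂ hg => hp.not_isUnit (isUnit_of_dvd_one (by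
      rw [← map_one φ, ← h, map_add, map_add, map_mul, map_mul]
      exact dvd_add (dvd_add (h₁.mul_left _) (h₂.mul_left _)) hg))
  obtain ⟨t, rfl⟩ := hφ t
  rw [← map_mul, ← map_add] at ht
  obtain ⟨p, q, hpq⟩ := ht
  obtain ⟨p, rfl⟩ := hφ p
  obtain ⟨q, rfl⟩ := hφ q
  let J := Ideal.span {f₁, f₂ + t * g}
  have hker : 1 - (p * f₁ + q * (f₂ + t * g)) ∈ m.map Polynomial.C := by
    rw [← Ideal.mk_ker (I := m), ← Polynomial.ker_mapRingHom, RingHom.mem_ker]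
    change φ _ = 0
    rw [map_sub, map_add, map_mul, map_mul, hpq, map_one, sub_self]
  have htop : J ⊔ m.map Polynomial.C = ⊤ := (Ideal.eq_top_iff_one _).2 <|
    Submodule.mem_sup.2 ⟨_, Ideal.mem_span_pair.2 ⟨p, q, rfl⟩, _, hker, add_sub_cancel _ _⟩
  obtain ⟨c, hcm, hcJ⟩ := exists_sub_one_mem_of_monic_mem hf (Ideal.subset_span (by simp)) htop
  obtain ⟨p, q, hc⟩ := Ideal.mem_span_pair.1 hcJ
  refine ⟨t, p, q, c, fun hc => m.ne_top_iff_one.1 (Ideal.IsMaximal.ne_top ‹_›) ?_, hc⟩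
  simpa using sub_mem hc hcm

/-- The ideal of those `c` for which specializations of `v` at points congruent modulo `c` are
equivalent. When it is the whole ring, `v` is equivalent to the constant vector `v(0)`. -/
def specializationIdeal {A ι : Type*} [CommRing A] [Fintype ι] [DecidableEq ι] (v : ι → A[X]) :
    Ideal A where
  carrier := {c | ∀ b b' : A[X], Polynomial.C c ∣ b' - b →
    UnimodularEquiv (fun i => (v i).comp b) (fun i => (v i).comp b')}
  zero_mem' b b' h := by
    rw [map_zero, zero_dvd_iff, sub_eq_zero] at h
    exact h ▸ UnimodularEquiv.refl _
  add_mem' {c d} hc hd b b' := by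
    rintro ⟨x, hx⟩
    refine (hc b (b + Polynomial.C c * x) (by simp)).trans (hd _ _ ⟨x, ?_⟩)
    rw [← sub_sub, hx, map_add]
    ring
  smul_mem' a c hc b b' h :=
    hc b b' ((map_dvd (Polynomial.C : A →+* A[X]) (dvd_mul_left c a)).trans h)

lemma mem_specializationIdeal {A ι : Type*} [CommRing A] [Fintype ι] [DecidableEq ι]
    {v : ι → A[X]} {c : A} :
    c ∈ specializationIdeal v ↔ ∀ b b' : A[X], Polynomial.C c ∣ b' - b →
      UnimodularEquiv (fun i => (v i).comp b) (fun i => (v i).comp b') :=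
  Iff.rfl

lemma specializationIdeal_le {A ι : Type*} [CommRing A] [Fintype ι] [DecidableEq ι]
    {v w : ι → A[X]} (h : UnimodularEquiv v w) : specializationIdeal w ≤ specializationIdeal v := by
  refine fun c hc => mem_specializationIdeal.2 fun b b' hb => ?_
  have hcomp (b : A[X]) : UnimodularEquiv (fun i => (v i).comp b) (fun i => (w i).comp b) :=
    h.map (Polynomial.compRingHom b)
  exact ((hcomp b).trans (mem_specializationIdeal.1 hc b b' hb)).trans (hcomp b').symm

lemma mem_specializationIdeal_of_eq_C {A κ : Type*} [CommRing A] [IsDomain A] [Fintype κ]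
    [DecidableEq κ] {v : Fin 2 ⊕ κ → A[X]} {g : Fin 2 → A[X]} {c : A}
    (h : v (.inl 0) * g 0 + v (.inl 1) * g 1 = Polynomial.C c) : c ∈ specializationIdeal v := by
  rcases eq_or_ne c 0 with rfl | hc
  · exact zero_mem _
  refine mem_specializationIdeal.2 fun b b' hb => ?_
  have hcomp (b : A[X]) : (v (.inl 0)).comp b * (g 0).comp b + (v (.inl 1)).comp b * (g 1).comp b =
      Polynomial.C c := by
    simp only [← Polynomial.mul_comp, ← Polynomial.add_comp, h, Polynomial.C_comp]
  have hdvd (p : A[X]) : Polynomial.C c ∣ p.comp b' - p.comp b := by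
    simpa only [Polynomial.eval_map, Polynomial.comp] using
      hb.trans (Polynomial.sub_dvd_eval_sub b' b (p.map Polynomial.C))
  exact unimodularEquiv_of_dvd_sub (g := fun i => (g i).comp b) (g' := fun i => (g i).comp b')
    (Polynomial.C_ne_zero.2 hc) (hcomp b) (hcomp b') (fun i => hdvd _) fun i => hdvd _

lemma specializationIdeal_eq_top {A κ : Type*} [CommRing A] [IsDomain A] [Fintype κ]
    [DecidableEq κ] {v w : Fin 2 ⊕ κ → A[X]} (hv : (v (.inl 0)).Monic) (hvw : v ⬝ᵥ w = 1) :
    specializationIdeal v = ⊤ := by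
  by_contra htop
  obtain ⟨m, hm, hle⟩ := Ideal.exists_le_maximal _ htop
  let g := ∑ k, v (.inr k) * w (.inr k)
  have hone : w (.inl 0) * v (.inl 0) + w (.inl 1) * v (.inl 1) + g = 1 := by
    rw [← hvw, dotProduct, Fintype.sum_sum_type, Fin.sum_univ_two]
    ring
  obtain ⟨t, p, q, c, hcm, hc⟩ := exists_C_eq_mul_add_mul hv hone m
  let T : Matrix (Fin 2) κ A[X] := of fun i k => if i = 1 then t * w (.inr k) else 0
  let M : Matrix (Fin 2 ⊕ κ) (Fin 2 ⊕ κ) A[X] := fromBlocks 1 T 0 1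
  have hM : UnimodularEquiv v (M *ᵥ v) := ⟨M, by simp [M], rfl⟩
  have hM0 : (M *ᵥ v) (.inl 0) = v (.inl 0) := by
    simp [M, T, mulVec, dotProduct]
  have hM1 : (M *ᵥ v) (.inl 1) = v (.inl 1) + t * g := by
    simp [M, T, mulVec, dotProduct, g, Finset.mul_sum, mul_comm, mul_left_comm]
  refine hcm (hle (specializationIdeal_le hM (mem_specializationIdeal_of_eq_C (g := ![p, q]) ?_)))
  rw [hM0, hM1, ← hc]
  simp [mul_comm]

lemma IsHermiteRing.unimodularEquiv_single_of_monic {A : Type*} [CommRing A] [IsDomain A]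
    (hA : IsHermiteRing A) {ι : Type} [Fintype ι] [DecidableEq ι] {v w : ι → A[X]}
    (hvw : v ⬝ᵥ w = 1) {j : ι} (hv : (v j).Monic) (i : ι) : UnimodularEquiv v (Pi.single i 1) := by
  rcases subsingleton_or_nontrivial ι with hι | hι
  · have hsum : v ⬝ᵥ w = v j * w j := Fintype.sum_subsingleton _ j
    have hj : v j = 1 := hv.eq_one_of_isUnit (IsUnit.of_mul_eq_one _ (hsum ▸ hvw))
    have : v = Pi.single i 1 := by
      ext1 k
      rw [Subsingleton.elim k j, Subsingleton.elim i j, hj, Pi.single_eq_same]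
    exact this ▸ UnimodularEquiv.refl v
  obtain ⟨k, hk⟩ := Nat.exists_eq_add_of_le (Fintype.one_lt_card (α := ι))
  let e₀ : Fin 2 ⊕ Fin k ≃ ι := Fintype.equivOfCardEq (by simp [hk])
  let e := e₀.trans (Equiv.swap (e₀ (.inl 0)) j)
  have he : e (.inl 0) = j := by simp [e]
  have hspec := specializationIdeal_eq_top (v := v ∘ e) (w := w ∘ e) (by rwa [Function.comp, he])
    (by rwa [comp_equiv_dotProduct_comp_equiv])
  have hone : (1 : A) ∈ specializationIdeal (v ∘ e) := hspec ▸ trivial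
  have hv0 : UnimodularEquiv v (Polynomial.C ∘ fun i => (v i).eval 0) := by
    refine UnimodularEquiv.of_reindex e ?_
    simpa [Function.comp_def] using mem_specializationIdeal.1 hone Polynomial.X 0 (by simp)
  have hw0 : (fun i => (v i).eval 0) ⬝ᵥ (fun i => (w i).eval 0) = 1 := by
    simpa [dotProduct, Polynomial.eval_finsetSum] using congrArg (Polynomial.eval 0) hvw
  have hsingle : Polynomial.C ∘ Pi.single i (1 : A) = Pi.single i 1 := by
    ext1 j
    rcases eq_or_ne j i with rfl | hji <;> simp [*]
  exact hv0.trans (hsingle ▸ (hA ι i _ _ hw0).map Polynomial.C)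

lemma IsHermiteRing.of_exists_ringEquiv_monic {A R : Type*} [CommRing A] [IsDomain A] [CommRing R]
    (hA : IsHermiteRing A)
    (hR : ∀ g : R, g ≠ 0 → ∃ (u : Rˣ) (e : R ≃+* A[X]), (e (u * g)).Monic) : IsHermiteRing R := by
  intro ι _ _ i v w hvw
  by_cases hv : ∃ j, v j ≠ 0
  · obtain ⟨j, hj⟩ := hv
    obtain ⟨u, e, he⟩ := hR (v j) hj
    have hew : (e ∘ ((u : R) • v)) ⬝ᵥ (e ∘ ((↑u⁻¹ : R) • w)) = 1 := by
      have := (RingHom.map_dotProduct (e : R →+* A[X]) ((u : R) • v) ((↑u⁻¹ : R) • w)).symm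
      simpa [hvw] using this
    have hcancel : e.symm ∘ e ∘ ((u : R) • v) = (u : R) • v :=
      funext fun _ => e.symm_apply_apply _
    have hsingle : e.symm ∘ Pi.single i (1 : A[X]) = Pi.single i 1 := by
      ext1 j
      rcases eq_or_ne j i with rfl | hji <;> simp [*]
    have hmap := (hA.unimodularEquiv_single_of_monic hew he i).map (e.symm : A[X] →+* R)
    exact (UnimodularEquiv.units_smul u v).trans (hcancel ▸ hsingle ▸ hmap)
  · push Not at hv
    have : Subsingleton R := subsingleton_of_zero_eq_one (by simpa [funext hv] using hvw)
    exact Subsingleton.elim v (Pi.single i 1) ▸ UnimodularEquiv.refl v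

lemma free_of_prod_equiv_apply_eq_single {R P ι : Type*} [CommRing R] [AddCommGroup P]
    [Module R P] [Finite ι] [DecidableEq ι] {e : (P × R) ≃ₗ[R] (ι → R)} {i : ι}
    (he : e (0, 1) = Pi.single i 1) : Module.Free R P := by
  have hsmul (r : R) : e (0, r) = Pi.single i r := by
    rw [show ((0, r) : P × R) = r • (0, 1) by simp, map_smul, he, ← Pi.single_smul, smul_eq_mul,
      mul_one]
  let q : P →ₗ[R] ({j // j ≠ i} → R) :=
    LinearMap.funLeft R R Subtype.val ∘ₗ e.toLinearMap ∘ₗ LinearMap.inl R P R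
  have hq (p : P) (j : {j // j ≠ i}) : q p j = e (p, 0) j := rfl
  refine .of_equiv (LinearEquiv.ofBijective q
    ⟨(injective_iff_map_eq_zero q).2 fun p hp => ?_, fun y => ?_⟩).symm
  · have hsingle : e (p, 0) = e (0, e (p, 0) i) := by
      rw [hsmul]
      ext1 j
      rcases eq_or_ne j i with rfl | hj
      · rw [Pi.single_eq_same]
      · rw [Pi.single_eq_of_ne hj]
        exact congrFun hp ⟨j, hj⟩
    exact congrArg Prod.fst (e.injective hsingle)
  · let x : ι → R := fun j => if hj : j ≠ i then y ⟨j, hj⟩ else 0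
    have hx : e ((e.symm x).1, 0) = x - Pi.single i (e.symm x).2 := by
      rw [eq_sub_iff_add_eq, ← hsmul, ← map_add]
      simp
    refine ⟨(e.symm x).1, funext fun j => ?_⟩
    rw [hq, hx, Pi.sub_apply, Pi.single_eq_of_ne j.2, sub_zero]
    exact dif_pos j.2

lemma IsHermiteRing.free_of_prod_equiv {R P : Type*} [CommRing R] (hR : IsHermiteRing R)
    [AddCommGroup P] [Module R P] {ι : Type} [Finite ι] (e : (P × R) ≃ₗ[R] (ι → R)) :
    Module.Free R P := by
  classical
  have := Fintype.ofFinite ι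
  cases subsingleton_or_nontrivial R
  · exact .of_subsingleton' R P
  let w (i : ι) : R := (e.symm (Pi.single i 1)).2
  have hw (x : ι → R) : x ⬝ᵥ w = (e.symm x).2 := by
    conv_rhs => rw [pi_eq_sum_univ' x]
    simp [dotProduct, w, Prod.snd_sum]
  have hvw : e (0, 1) ⬝ᵥ w = 1 := by simp [hw]
  obtain ⟨i⟩ : Nonempty ι := by
    by_contra hι
    rw [not_nonempty_iff] at hι
    exact zero_ne_one ((dotProduct_of_isEmpty _ _).symm.trans hvw)
  obtain ⟨M, hM, hMv⟩ := hR ι i _ _ hvw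
  exact free_of_prod_equiv_apply_eq_single
    (e := e.trans (Matrix.toLinearEquiv' M (M.invertibleOfIsUnitDet hM))) hMv

lemma IsHermiteRing.free_of_free_prod {R P : Type*} [CommRing R] (hR : IsHermiteRing R)
    [AddCommGroup P] [Module R P] [Module.Finite R P] [Module.Free R (P × R)] :
    Module.Free R P :=
  hR.free_of_prod_equiv
    ((Module.Free.chooseBasis R (P × R)).reindex (Fintype.equivFin _)).equivFun

lemma IsHermiteRing.free_of_isStablyFree {R P : Type*} [CommRing R] (hR : IsHermiteRing R)
    [AddCommGroup P] [Module R P] [Module.Finite R P] [Module.IsStablyFree R P] :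
    Module.Free R P := by
  obtain ⟨N, _, _, _, _, hN⟩ := Module.IsStablyFree.exist_free_prod R P
  let b := (Module.Free.chooseBasis R N).reindex (Fintype.equivFin _)
  have hfree := Module.Free.of_equiv ((LinearEquiv.refl R P).prodCongr b.equivFun)
  generalize Fintype.card (Module.Free.ChooseBasisIndex R N) = m at hfree
  induction m with
  | zero => exact .of_equiv (LinearEquiv.prodUnique : (P × (Fin 0 → R)) ≃ₗ[R] P)
  | succ m ih =>
    let e : (P × (Fin (m + 1) → R)) ≃ₗ[R] (P × (Fin m → R)) × R :=
      ((LinearEquiv.refl R P).prodCongr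
        ((Fin.consLinearEquiv R fun _ => R).symm.trans (LinearEquiv.prodComm R _ _))).trans
        (LinearEquiv.prodAssoc R _ _ _).symm
    have := Module.Free.of_equiv e
    exact ih hR.free_of_free_prod

end Hermite

section QuillenSuslin

open scoped Polynomial

lemma ProjectivesFree.of_exists_ringEquiv_monic {A R : Type u} [CommRing A] [IsDomain A]
    [CommRing R] [IsDomain R] (hA : ProjectivesFree A)
    (hR : ∀ g : R, g ≠ 0 → ∃ (u : Rˣ) (e : R ≃+* A[X]), (e (u * g)).Monic) :
    ProjectivesFree R := by
  intro P _ _ _ _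
  obtain ⟨r, b, g, hb, hg, hspan⟩ := exists_linearIndependent_smul_mem_span R P
  obtain ⟨u, e, he⟩ := hR g hg
  let _ : Module A[X] P := Module.compHom P (e.symm : A[X] →+* R)
  let _ : Module A P := Module.compHom P (Polynomial.C : A →+* A[X])
  have : IsScalarTower A A[X] P := ⟨fun a f p => by
    rw [← Polynomial.C_mul', mul_smul]; rfl⟩
  let _ := RingHomInvPair.of_ringEquiv e
  let _ := RingHomInvPair.symm (e : R →+* A[X]) (e.symm : A[X] →+* R)
  let φ : P ≃ₛₗ[(e : R →+* A[X])] P :=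
    { AddEquiv.refl P with
      map_smul' a p := by
        change a • p = e.symm (e a) • p
        rw [e.symm_apply_apply] }
  have : Module.Projective A[X] P := .of_equiv φ
  have : Module.Finite A[X] P := .of_surjective φ.toLinearMap φ.surjective
  have hb' : LinearIndependent A[X] b :=
    hb.map_of_surjective_injectiveₛ e (AddMonoidHom.id P) e.surjective
      Function.injective_id fun a p => φ.map_smulₛₗ a p
  have hspan' (p : P) : e (u * g) • p ∈ Submodule.span A[X] (Set.range b) := by
    have hp : φ ((u * g) • p) ∈ (Submodule.span R (Set.range b)).map φ.toLinearMap :=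
      Submodule.mem_map_of_mem (by rw [mul_smul]; exact Submodule.smul_mem _ _ (hspan p))
    rw [Submodule.map_span, map_smulₛₗ] at hp
    simpa [φ] using hp
  have hHermite : IsHermiteRing A[X] := hA.isHermiteRing.of_exists_ringEquiv_monic fun g' hg' => by
    obtain ⟨u', e', he'⟩ := hR (e.symm g') ((map_ne_zero_iff _ e.symm.injective).2 hg')
    exact ⟨Units.map (e : R →* A[X]) u', e.symm.trans e', by simpa using he'⟩
  have := isStablyFree_of_monic_smul_mem_span hA hb' he hspan'
  have : Module.Free A[X] P := hHermite.free_of_isStablyFree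
  exact .of_equiv φ.symm

lemma projectivesFree_of_isField {A : Type u} [CommRing A] (hA : IsField A) :
    ProjectivesFree A := by
  intro P _ _ _ _
  let _ := hA.toField
  exact Module.Free.of_divisionRing A P

lemma mvPolynomial_exists_unit_ringEquiv_monic {K : Type*} [Field K] {n : ℕ}
    {g : MvPolynomial (Fin (n + 1)) K} (hg : g ≠ 0) :
    ∃ (u : (MvPolynomial (Fin (n + 1)) K)ˣ)
      (e : MvPolynomial (Fin (n + 1)) K ≃+* (MvPolynomial (Fin n) K)[X]), (e (u * g)).Monic := by
  obtain ⟨e, c, hc⟩ := mvPolynomial_exists_ringEquiv_isUnit_leadingCoeff hg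
  refine ⟨Units.map ((e.symm : _ →+* _).comp Polynomial.C).toMonoidHom c⁻¹, e, ?_⟩
  simpa using Polynomial.monic_C_mul_of_mul_leadingCoeff_eq_one (hc ▸ c.inv_mul)

theorem projectivesFree_mvPolynomial (K : Type u) [Field K] (n : ℕ) :
    ProjectivesFree (MvPolynomial (Fin n) K) := by
  induction n with
  | zero =>
    exact projectivesFree_of_isField
      ((isEmptyRingEquiv K (Fin 0)).toMulEquiv.isField (Field.toIsField K))
  | succ n ih =>
    exact ih.of_exists_ringEquiv_monic fun _ => mvPolynomial_exists_unit_ringEquiv_monic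

end QuillenSuslin

section Cramer

lemma det_smul_eq_mul_adjugate_mul {R m n : Type*} [CommRing R] [IsDomain R] [Fintype n]
    [DecidableEq n] {A : Matrix n n R} {b : Matrix n m R} {c : Matrix m n R} {d : Matrix m m R}
    [Unique m] (hA : A.det ≠ 0) (hdet : (fromBlocks A b c d).det = 0) :
    A.det • d = c * A.adjugate * b := by
  have hmul : fromBlocks A b c d * fromBlocks A.adjugate (-(A.adjugate * b)) 0 (A.det • 1) =
      fromBlocks (A.det • 1) 0 (c * A.adjugate) (A.det • d - c * A.adjugate * b) := by
    rw [fromBlocks_multiply]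
    congr 1 <;> simp [← Matrix.mul_assoc, mul_adjugate, sub_eq_neg_add]
  have hschur : (A.det • d - c * A.adjugate * b).det = 0 := by
    have := congrArg det hmul
    rw [det_mul, hdet, zero_mul, det_fromBlocks_zero₁₂, eq_comm, det_smul, det_one, mul_one] at this
    exact (mul_eq_zero.1 this).resolve_left (pow_ne_zero _ hA)
  rw [det_unique] at hschur
  rw [← sub_eq_zero]
  ext i j
  rwa [Unique.eq_default i, Unique.eq_default j]

variable {R : Type*} [CommRing R] {k l m : ℕ} {M : Matrix (Fin l) (Fin m) R}

lemma det_submatrix_eq_zero_of_minorsSet (hM : ∀ p ∈ minorsSet M k, p = 0)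
    {ι : Type*} [Fintype ι] [DecidableEq ι] (hι : Fintype.card ι = k)
    (r : ι → Fin l) (c : ι → Fin m) : (M.submatrix r c).det = 0 := by
  by_cases hr : Function.Injective r
  · by_cases hc : Function.Injective c
    · let ε : Fin k ≃ ι := (Fintype.equivFinOfCardEq hι).symm
      rw [← det_submatrix_equiv_self ε]
      exact hM _ ⟨⟨r ∘ ε, hr.comp ε.injective⟩, ⟨c ∘ ε, hc.comp ε.injective⟩, rfl⟩
    · obtain ⟨a, b, hab, hne⟩ := Function.not_injective_iff.1 hc
      exact det_zero_of_column_eq hne fun i => by rw [submatrix_apply, submatrix_apply, hab]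
  · obtain ⟨a, b, hab, hne⟩ := Function.not_injective_iff.1 hr
    exact det_zero_of_row_eq hne (funext fun i => by rw [submatrix_apply, submatrix_apply, hab])

lemma exists_mem_minorsSet_ne_zero_of_span_eq_top [Nontrivial R]
    (hspan : Ideal.span (minorsSet M k) = ⊤) :
    ∃ p ∈ minorsSet M k, p ≠ 0 := by
  by_contra! h
  exact bot_ne_top ((Ideal.span_eq_bot.2 h).symm.trans hspan)

variable [IsDomain R]

lemma det_submatrix_smul_eq (hM : ∀ p ∈ minorsSet M (k + 1), p = 0)
    {r : Fin k → Fin l} {c : Fin k → Fin m} (hrc : (M.submatrix r c).det ≠ 0) :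
    (M.submatrix r c).det • M =
      M.submatrix id c * (M.submatrix r c).adjugate * M.submatrix r id := by
  ext i j
  have hdet : (fromBlocks (M.submatrix r c) (M.submatrix r fun _ : Unit => j)
      (M.submatrix (fun _ : Unit => i) c) (M.submatrix (fun _ => i) fun _ => j)).det = 0 := by
    rw [← det_submatrix_eq_zero_of_minorsSet hM (ι := Fin k ⊕ Unit) (by simp)
      (Sum.elim r fun _ => i) (Sum.elim c fun _ => j)]
    congr 1
    ext (_ | _) (_ | _) <;> rfl
  exact congrFun₂ (det_smul_eq_mul_adjugate_mul hrc hdet) () ()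

lemma rank_le_of_minorsSet (hM : ∀ p ∈ minorsSet M (k + 1), p = 0)
    {r : Fin k → Fin l} {c : Fin k → Fin m} (hrc : (M.submatrix r c).det ≠ 0) : M.rank ≤ k := by
  rw [← rank_smul_of_mem_nonZeroDivisors M (mem_nonZeroDivisors_of_ne_zero hrc),
    det_submatrix_smul_eq hM hrc]
  calc _ ≤ (M.submatrix id c * (M.submatrix r c).adjugate).rank := rank_mul_le_left _ _
    _ ≤ k := rank_le_width _

lemma exists_mul_mul_eq_smul_of_mem_minorsSet (hM : ∀ p ∈ minorsSet M (k + 1), p = 0) {p : R}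
    (hp : p ∈ minorsSet M k) : ∃ H : Matrix (Fin m) (Fin l) R, M * H * M = p • M := by
  obtain ⟨r, c, rfl⟩ := hp
  by_cases hrc : (M.submatrix r c).det = 0
  · exact ⟨0, by rw [hrc, zero_smul, Matrix.mul_zero, Matrix.zero_mul]⟩
  let P : Matrix (Fin m) (Fin k) R := submatrix 1 id c
  let Q : Matrix (Fin k) (Fin l) R := submatrix 1 r id
  have hcols : M * P = M.submatrix id c := by ext; simp [P, mul_apply, one_apply]
  have hrows : Q * M = M.submatrix r id := by ext; simp [Q, mul_apply, one_apply]
  refine ⟨P * (M.submatrix r c).adjugate * Q, ?_⟩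
  rw [det_submatrix_smul_eq hM hrc, ← hcols, ← hrows]
  simp only [Matrix.mul_assoc]

lemma exists_generalizedInverse (hM : ∀ p ∈ minorsSet M (k + 1), p = 0)
    (hspan : Ideal.span (minorsSet M k) = ⊤) : ∃ H : Matrix (Fin m) (Fin l) R, M * H * M = M := by
  let I : Ideal R :=
    { carrier := {p | ∃ H : Matrix (Fin m) (Fin l) R, M * H * M = p • M}
      zero_mem' := ⟨0, by simp⟩
      add_mem' := by
        rintro p q ⟨H, hH⟩ ⟨H', hH'⟩
        exact ⟨H + H', by rw [Matrix.mul_add, Matrix.add_mul, hH, hH', add_smul]⟩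
      smul_mem' := by
        rintro a p ⟨H, hH⟩
        exact ⟨a • H, by rw [Matrix.mul_smul, Matrix.smul_mul, hH, smul_assoc]⟩ }
  have hI : Ideal.span (minorsSet M k) ≤ I :=
    Ideal.span_le.2 fun _ => exists_mul_mul_eq_smul_of_mem_minorsSet hM
  obtain ⟨H, hH⟩ := hI (hspan ▸ Submodule.mem_top : (1 : R) ∈ _)
  exact ⟨H, by rwa [one_smul] at hH⟩

end Cramer

section Split

variable {R : Type u} [CommRing R] [Nontrivial R]

lemma ProjectivesFree.exists_basis_of_isIdempotentElem (hR : ProjectivesFree R)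
    {l : ℕ} {e : (Fin l → R) →ₗ[R] Fin l → R} (he : IsIdempotentElem e) :
    ∃ b : Module.Basis (Fin l) R (Fin l → R), ∀ x ∈ LinearMap.range e, ∀ i : Fin l,
      Module.finrank R (LinearMap.range e) ≤ i → b.repr x i = 0 := by
  let E := Submodule.prodEquivOfIsCompl _ _ (LinearMap.IsIdempotentElem.isCompl he)
  have hproj : Module.Projective R (LinearMap.range e × LinearMap.ker e) := .of_equiv E.symm
  have hfin : Module.Finite R (LinearMap.range e × LinearMap.ker e) := .equiv E.symm
  have : Module.Projective R (LinearMap.range e) :=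
    .of_split (.inl R _ _) (.fst R _ (LinearMap.ker e)) (LinearMap.fst_comp_inl ..)
  have : Module.Projective R (LinearMap.ker e) :=
    .of_split (.inr R _ _) (.snd R (LinearMap.range e) _) (LinearMap.snd_comp_inr ..)
  have : Module.Finite R (LinearMap.range e) :=
    .of_surjective (.fst R _ (LinearMap.ker e)) Prod.fst_surjective
  have : Module.Finite R (LinearMap.ker e) :=
    .of_surjective (.snd R (LinearMap.range e) _) Prod.snd_surjective
  have := hR (LinearMap.range e)
  have := hR (LinearMap.ker e)
  let b := ((Module.finBasis R (LinearMap.range e)).prod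
    (Module.finBasis R (LinearMap.ker e))).map E
  have hl : Module.finrank R (LinearMap.range e) + Module.finrank R (LinearMap.ker e) = l := by
    simpa using Fintype.card_congr (b.indexEquiv (Pi.basisFun R (Fin l)))
  refine ⟨b.reindex (finSumFinEquiv.trans (finCongr hl)), fun x hx i hi => ?_⟩
  obtain ⟨j, rfl⟩ : ∃ j, i = Fin.cast hl (Fin.natAdd _ j) :=
    ⟨⟨i - Module.finrank R (LinearMap.range e), by omega⟩, by ext; simp; omega⟩
  have hEx : E.symm x = (⟨x, hx⟩, 0) := Submodule.prodEquivOfIsCompl_symm_apply_left _ _ _ ⟨x, hx⟩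
  rw [Module.Basis.repr_reindex_apply]
  simp [b, hEx]

lemma ProjectivesFree.exists_isUnit_det_mul_apply_eq_zero (hR : ProjectivesFree R)
    {l m : ℕ} {M : Matrix (Fin l) (Fin m) R} {H : Matrix (Fin m) (Fin l) R} (hH : M * H * M = M) :
    ∃ U : Matrix (Fin l) (Fin l) R, IsUnit U.det ∧
      ∀ (i : Fin l) (j : Fin m), M.rank ≤ i → (U * M) i j = 0 := by
  have he : IsIdempotentElem (M * H).mulVecLin := by
    rw [IsIdempotentElem, Module.End.mul_eq_comp, ← mulVecLin_mul, ← Matrix.mul_assoc, hH]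
  have hrange : LinearMap.range (M * H).mulVecLin = LinearMap.range M.mulVecLin := by
    refine le_antisymm (mulVecLin_mul M H ▸ LinearMap.range_comp_le_range _ _) ?_
    nth_rw 1 [← hH, mulVecLin_mul]
    exact LinearMap.range_comp_le_range _ _
  obtain ⟨b, hb⟩ := hR.exists_basis_of_isIdempotentElem he
  rw [hrange] at hb
  refine ⟨LinearMap.toMatrix' b.equivFun, ?_, fun i j hi => ?_⟩
  · rw [LinearMap.det_toMatrix']
    exact b.equivFun.isUnit_det'
  · calc _ = (LinearMap.toMatrix' b.equivFun *ᵥ (M *ᵥ Pi.single j 1)) i := by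
          rw [mulVec_mulVec, mulVec_single_one]; rfl
      _ = b.repr (M *ᵥ Pi.single j 1) i := by
          rw [LinearMap.toMatrix'_mulVec]; rfl
      _ = 0 := hb _ ⟨_, rfl⟩ i hi

end Split

section Subst

variable {R : Type*} [CommRing R] {n : ℕ}

/-- The substitution `z₁ ↦ f`, `zᵢ₊₁ ↦ zᵢ`, which identifies the quotient by `z₁ - f` with a
polynomial ring in one variable fewer. -/
noncomputable def substZero (f : MvPolynomial (Fin n) R) :
    MvPolynomial (Fin (n + 1)) R →ₐ[R] MvPolynomial (Fin n) R :=
  aeval (Fin.cases f X)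

lemma substZero_X_zero (f : MvPolynomial (Fin n) R) : substZero f (X 0) = f := by
  simp [substZero]

lemma substZero_rename_succ (f p : MvPolynomial (Fin n) R) :
    substZero f (rename Fin.succ p) = p := by
  have h : (substZero f).comp (rename Fin.succ) = AlgHom.id R _ :=
    algHom_ext fun i => by simp [substZero]
  exact DFunLike.congr_fun h p

lemma X_zero_sub_rename_succ_dvd_of_substZero_eq_zero {f : MvPolynomial (Fin n) R}
    {p : MvPolynomial (Fin (n + 1)) R} (hp : substZero f p = 0) :
    X 0 - rename Fin.succ f ∣ p := by
  let π := Ideal.Quotient.mkₐ R (Ideal.span {X 0 - rename Fin.succ f})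
  have hπ : (π.comp (rename Fin.succ)).comp (substZero f) = π := by
    refine algHom_ext fun i => ?_
    cases i using Fin.cases with
    | zero =>
      rw [AlgHom.comp_apply, AlgHom.comp_apply, substZero_X_zero]
      exact (Ideal.Quotient.eq.2 (Ideal.mem_span_singleton_self _)).symm
    | succ i => simp [substZero]
  rw [← Ideal.mem_span_singleton, ← Ideal.Quotient.eq_zero_iff_mem]
  change π p = 0
  rw [← hπ, AlgHom.comp_apply, hp, map_zero]

lemma supported_val_ne_zero_eq_range_rename_succ :
    supported R {t : Fin (n + 1) | (t : ℕ) ≠ 0} =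
      (rename Fin.succ : MvPolynomial (Fin n) R →ₐ[R] _).range := by
  have hsucc : {t : Fin (n + 1) | (t : ℕ) ≠ 0} = Set.range Fin.succ := by
    rw [Fin.range_succ]
    ext t
    exact Fin.val_ne_zero_iff
  rw [supported, hsucc, ← Set.range_comp, Algebra.adjoin_range_eq_range_aeval]
  exact congrArg AlgHom.range (algHom_ext fun i => by simp)

end Subst

section Main

lemma minorsSet_map {A B : Type*} [CommRing A] [CommRing B] (φ : A →+* B) {l m : ℕ}
    (F : Matrix (Fin l) (Fin m) A) (k : ℕ) : minorsSet (F.map φ) k = φ '' minorsSet F k := by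
  ext p
  constructor
  · rintro ⟨r, c, rfl⟩
    exact ⟨_, ⟨r, c, rfl⟩, RingHom.map_det φ _⟩
  · rintro ⟨_, ⟨r, c, rfl⟩, rfl⟩
    exact ⟨r, c, RingHom.map_det φ _⟩

lemma reducedIdeal_one {A : Type*} [CommRing A] {l m : ℕ} (F : Matrix (Fin l) (Fin m) A) (k : ℕ) :
    reducedIdeal F k 1 = Ideal.span (minorsSet F k) := by
  simp only [reducedIdeal, one_mul, Set.ofPred_mem_eq]

lemma ProjectivesFree.exists_isUnit_det_forall_ge_mul_apply_eq_zero {R : Type u} [CommRing R]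
    [IsDomain R] (hR : ProjectivesFree R) {k l m : ℕ} {M : Matrix (Fin l) (Fin m) R}
    (hspan : Ideal.span (minorsSet M k) = ⊤) (hM : ∀ p ∈ minorsSet M (k + 1), p = 0) :
    ∃ U : Matrix (Fin l) (Fin l) R,
      IsUnit U.det ∧ ∀ (i : Fin l) (j : Fin m), k ≤ i → (U * M) i j = 0 := by
  obtain ⟨_, ⟨r, c, rfl⟩, hrc⟩ := exists_mem_minorsSet_ne_zero_of_span_eq_top hspan
  obtain ⟨H, hH⟩ := exists_generalizedInverse hM hspan
  obtain ⟨U, hU, hUM⟩ := hR.exists_isUnit_det_mul_apply_eq_zero hH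
  exact ⟨U, hU, fun i j hi => hUM i j ((rank_le_of_minorsSet hM hrc).trans hi)⟩

lemma exists_eq_diagonal_mul {A : Type*} [CommRing A] {k l m : ℕ} {a : A}
    {N : Matrix (Fin l) (Fin m) A} (hN : ∀ (i : Fin l) (j : Fin m), k ≤ i → a ∣ N i j) :
    ∃ G : Matrix (Fin l) (Fin m) A,
      N = diagonal (fun i : Fin l => if (i : ℕ) < k then 1 else a) * G := by
  have h (i : Fin l) (j : Fin m) : ∃ g, N i j = (if (i : ℕ) < k then 1 else a) * g := by
    split_ifs with hi
    · exact ⟨N i j, (one_mul _).symm⟩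
    · exact hN i j (not_lt.1 hi)
  choose G hG using h
  exact ⟨of G, by ext i j; rw [hG, diagonal_mul, of_apply]⟩

theorem statement8_general {K : Type*} [Field K] {n k l m : ℕ}
    {F : Matrix (Fin l) (Fin m) (MvPolynomial (Fin (n + 1)) K)}
    {f : MvPolynomial (Fin (n + 1)) K}
    (hf : f ∈ supported K {t : Fin (n + 1) | (t : ℕ) ≠ 0})
    (hk : Ideal.span (minorsSet F k) = ⊤)
    (hk1 : ∀ p ∈ minorsSet F (k + 1), X 0 - f ∣ p) :
    ∃ (U : Matrix (Fin l) (Fin l) (MvPolynomial (Fin (n + 1)) K))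
      (G : Matrix (Fin l) (Fin m) (MvPolynomial (Fin (n + 1)) K)),
      IsUnit U.det ∧ (∀ i i', U i i' ∈ supported K {t : Fin (n + 1) | (t : ℕ) ≠ 0}) ∧
      U * F = diagonal (fun i : Fin l => if (i : ℕ) < k then 1 else X 0 - f) * G := by
  rw [supported_val_ne_zero_eq_range_rename_succ] at hf ⊢
  obtain ⟨f, rfl⟩ := hf
  let ι : MvPolynomial (Fin n) K →+* MvPolynomial (Fin (n + 1)) K :=
    (rename (Fin.succ : Fin n → Fin (n + 1)) : _ →ₐ[K] _).toRingHom
  let σ : MvPolynomial (Fin (n + 1)) K →+* MvPolynomial (Fin n) K := substZero f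
  have hσι (V : Matrix (Fin l) (Fin l) (MvPolynomial (Fin n) K)) : (V.map ι).map σ = V := by
    ext1 i j
    exact substZero_rename_succ f (V i j)
  have hspan : Ideal.span (minorsSet (F.map σ) k) = ⊤ := by
    rw [minorsSet_map, ← Ideal.map_span, hk, Ideal.map_top]
  have hzero : ∀ p ∈ minorsSet (F.map σ) (k + 1), p = 0 := by
    rw [minorsSet_map]
    rintro _ ⟨p, hp, rfl⟩
    refine eq_zero_of_zero_dvd ?_
    have hσ0 : σ (X 0 - rename Fin.succ f) = 0 := by
      rw [map_sub, sub_eq_zero]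
      exact (substZero_X_zero f).trans (substZero_rename_succ f f).symm
    exact hσ0 ▸ map_dvd σ (hk1 p hp)
  obtain ⟨V, hV, hVF⟩ :=
    (projectivesFree_mvPolynomial K n).exists_isUnit_det_forall_ge_mul_apply_eq_zero hspan hzero
  obtain ⟨G, hG⟩ := exists_eq_diagonal_mul (k := k) (N := V.map ι * F) fun i j hi =>
    X_zero_sub_rename_succ_dvd_of_substZero_eq_zero (f := f) <| by
      rw [← hVF i j hi]
      conv_rhs => rw [← hσι V, ← Matrix.map_mul]
      rfl
  refine ⟨V.map ι, G, ?_, fun i i' => ⟨V i i', rfl⟩, hG⟩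
  rw [← RingHom.mapMatrix_apply, ← RingHom.map_det]
  exact hV.map ι

end Main

theorem statement8 {K : Type*} [Field K] (n : ℕ) (hn : 2 ≤ n) (l : ℕ)
    (F : Matrix (Fin l) (Fin l) (MvPolynomial (Fin n) K))
    (f : MvPolynomial (Fin n) K)
    (hf : f ∈ MvPolynomial.supported K {t : Fin n | (t : ℕ) ≠ 0})
    (hdvd : (MvPolynomial.X (⟨0, by omega⟩ : Fin n) - f) ∣ F.det)
    (k : ℕ) (hk1 : 1 ≤ k) (hkl : k < l)
    (hdk : IsGcdMinors F k 1)
    (hJk : reducedIdeal F k 1 = ⊤)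
    (hdk1 : ∃ d : MvPolynomial (Fin n) K, IsGcdMinors F (k + 1) d ∧
      (MvPolynomial.X (⟨0, by omega⟩ : Fin n) - f) ∣ d) :
    ∃ U G : Matrix (Fin l) (Fin l) (MvPolynomial (Fin n) K),
      IsUnit U.det ∧
      (∀ i i' : Fin l, U i i' ∈ MvPolynomial.supported K {t : Fin n | (t : ℕ) ≠ 0}) ∧
      U * F = Matrix.diagonal (fun i : Fin l =>
        if (i : ℕ) < k then 1 else MvPolynomial.X (⟨0, by omega⟩ : Fin n) - f) * G := by
  obtain ⟨n, rfl⟩ : ∃ n', n = n' + 1 := ⟨n - 1, by omega⟩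
  obtain ⟨d, hd, hdvd⟩ := hdk1
  exact statement8_general hf (reducedIdeal_one F k ▸ hJk) fun p hp => hdvd.trans (hd.1 p hp)
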